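/- Let Ω ⊆ ℝ² be a nonempty open simply connected set and let F : ℝ² → ℝ² be continuously differentiable on Ω. If ∫_Ω F(x) · ∇v(x) dx = 0 for every C^∞ function v : ℝ² → ℝ with compact support contained in Ω, then there exists a twice continuously differentiable function φ : Ω → ℝ such that F(x) = curl φ(x) for all x ∈ Ω. -/

import Mathlib

/-!
Integrating by parts, the weak condition says that the continuous function `∂₁F₁ + ∂₂F₂` integrates
to zero against every test function, so it vanishes on `Ω` (`divergence_eq_zero`). Equivalently, the
1-form `ω = -F₂ dx₁ + F₁ dx₂` is closed, and `F = curl φ` is the equation `dφ = ω`.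

It remains to find a primitive of a closed 1-form on a simply connected open set
(`exists_primitive_of_simplyConnected`). On balls this is the Poincaré lemma for convex sets. The
germs of local primitives form a covering space of `Ω` with fibre `ℝ` carrying the discrete topology
(`primitiveCore`). As `Ω` is simply connected, the identity of `Ω` lifts to a global section of this
covering (`exists_glued_primitive`), and a section is a global primitive. Its derivative `ω` is `C¹`,
so the primitive is `C²`.
-/

open MeasureTheory Set

/-- First partial derivative ∂f/∂x₁. -/
noncomputable def pd1 (f : ℝ × ℝ → ℝ) (x : ℝ × ℝ) : ℝ := fderiv ℝ f x (1, 0)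

/-- Second partial derivative ∂f/∂x₂. -/
noncomputable def pd2 (f : ℝ × ℝ → ℝ) (x : ℝ × ℝ) : ℝ := fderiv ℝ f x (0, 1)

/-- Gradient of a scalar function on ℝ². -/
noncomputable def grad2 (f : ℝ × ℝ → ℝ) (x : ℝ × ℝ) : ℝ × ℝ := (pd1 f x, pd2 f x)

/-- Vector curl of a scalar function on ℝ²: curl φ = (∂φ/∂x₂, −∂φ/∂x₁). -/
noncomputable def scurl (f : ℝ × ℝ → ℝ) (x : ℝ × ℝ) : ℝ × ℝ := (pd2 f x, -pd1 f x)

/-- Euclidean dot product on ℝ². -/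
def dot2 (a b : ℝ × ℝ) : ℝ := a.1 * b.1 + a.2 * b.2

/-- The real line with the discrete topology. -/
def DiscreteReal : Type := ℝ

instance : TopologicalSpace DiscreteReal := ⊥

instance : DiscreteTopology DiscreteReal := ⟨rfl⟩

/-- The tautological bijection onto the real line. -/
def DiscreteReal.toReal : DiscreteReal ≃ ℝ := Equiv.refl ℝ

open DiscreteReal in
/-- The covering space of germs of primitives, as a bundle with discrete fibre. The local primitive
`f i` lives on `U i`; the point with coordinate `v` over `x` in the chart `i` stands for the germ at
`x` of `f i + v`, so passing to the chart `j` adds `f i x - f j x`. That difference is constant on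
`U i ∩ U j`, which is what makes the coordinate change continuous for the discrete topology. -/
noncomputable def primitiveCore {X : Type*} [TopologicalSpace X] (U : X → Set X)
    (hU : ∀ i, IsOpen (U i)) (hmem : ∀ i, i ∈ U i) (f : X → X → ℝ)
    (hconst : ∀ i j, ∃ c : ℝ, ∀ x ∈ U i ∩ U j, f i x - f j x = c) :
    FiberBundleCore X X DiscreteReal where
  baseSet := U
  isOpen_baseSet := hU
  indexAt := id
  mem_baseSet_at := hmem
  coordChange i j x v := toReal.symm (toReal v + (f i x - f j x))
  coordChange_self i x _ v := by simp
  continuousOn_coordChange i j := by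
    obtain ⟨c, hc⟩ := hconst i j
    have h : Continuous fun p : X × DiscreteReal ↦ toReal.symm (toReal p.2 + c) :=
      (continuous_of_discreteTopology (f := fun v ↦ toReal.symm (toReal v + c))).comp
        continuous_snd
    refine h.continuousOn.congr fun p hp ↦ ?_
    simp only [hc p.1 hp.1]
  coordChange_comp i j k x _ v := by
    simp only [Equiv.apply_symm_apply]
    congr 1
    ring

open DiscreteReal in
/-- On a simply connected space, local functions whose pairwise differences are constant can be
corrected by constants so as to agree: the identity map lifts to a global section of the covering of
germs. -/
theorem exists_glued_primitive {X : Type*} [TopologicalSpace X] [SimplyConnectedSpace X]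
    [LocallyPathConnectedSpace X] (U : X → Set X)
    (hU : ∀ i, IsOpen (U i)) (hmem : ∀ i, i ∈ U i) (f : X → X → ℝ)
    (hconst : ∀ i j, ∃ c : ℝ, ∀ x ∈ U i ∩ U j, f i x - f j x = c) :
    ∃ φ : X → ℝ, ∀ i, ∃ c : ℝ, ∀ᶠ x in nhds i, φ x = f i x + c := by
  let Z := primitiveCore U hU hmem f hconst
  have cov : IsCoveringMap (Bundle.TotalSpace.proj : Bundle.TotalSpace DiscreteReal Z.Fiber → X) :=
    FiberBundle.isCoveringMap (F := DiscreteReal) (E := Z.Fiber)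
  obtain ⟨a₀⟩ : Nonempty X := inferInstance
  obtain ⟨s, ⟨-, hs⟩, -⟩ := cov.existsUnique_continuousMap_lifts (ContinuousMap.id X) a₀
    ⟨a₀, toReal.symm 0⟩ rfl
  have hs' : ∀ x, (s x).1 = x := fun x ↦ congrFun hs x
  -- The fibre coordinate of `s x` in the chart indexed by `x` itself.
  let σ : X → DiscreteReal := fun x ↦ (s x).2
  refine ⟨fun x ↦ f x x + toReal (σ x), fun i ↦ ?_⟩
  -- In the fixed chart `i` the coordinate of `s` is continuous with discrete values, hence constant
  -- near `i`, and `f x x + σ x` is `f i x` plus that coordinate.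
  have hcont : ContinuousAt (fun x ↦ (Z.localTriv i (s x)).2) i := by
    have h1 : ContinuousAt (Z.localTriv i) (s i) := by
      refine (Z.localTriv i).continuousAt ?_
      rw [Z.mem_localTriv_source, hs']
      exact hmem i
    exact continuous_snd.continuousAt.comp (h1.comp s.continuous.continuousAt)
  have hev : ∀ᶠ x in nhds i, (Z.localTriv i (s x)).2 = (Z.localTriv i (s i)).2 := by
    have := hcont.tendsto
    rw [nhds_discrete DiscreteReal] at this
    exact Filter.tendsto_pure.1 this
  have hloc : ∀ x, toReal (Z.localTriv i (s x)).2 = toReal (σ x) + (f x x - f i x) := fun x ↦ by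
    rw [Z.localTriv_apply]
    change toReal (σ x) + (f (s x).1 (s x).1 - f i (s x).1) = _
    rw [hs']
  refine ⟨toReal (Z.localTriv i (s i)).2, ?_⟩
  filter_upwards [hev] with x hx
  rw [← hx, hloc]
  ring

/-- **Poincaré lemma** for 1-forms on a simply connected open set: local primitives on balls exist by
convexity, and differ by constants on intersections of two balls, which are convex. -/
theorem exists_primitive_of_simplyConnected {E : Type*} [NormedAddCommGroup E] [NormedSpace ℝ E]
    {Ω : Set E} (hΩ : IsOpen Ω) (hsc : SimplyConnectedSpace Ω) {ω : E → E →L[ℝ] ℝ}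
    (hω : DifferentiableOn ℝ ω Ω) (hsymm : ∀ a ∈ Ω, ∀ x y, fderiv ℝ ω a x y = fderiv ℝ ω a y x) :
    ∃ φ : E → ℝ, ∀ x ∈ Ω, HasFDerivAt φ (ω x) x := by
  have := hΩ.locallyPathConnectedSpace
  have hball : ∀ i : Ω, ∃ r > 0, Metric.ball (i : E) r ⊆ Ω := fun i ↦
    Metric.isOpen_iff.1 hΩ i i.2
  choose r hr hrΩ using hball
  have hloc : ∀ i : Ω, ∃ f : E → ℝ, ∀ a ∈ Metric.ball (i : E) (r i), HasFDerivAt f (ω a) a :=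
    fun i ↦ (convex_ball _ _).exists_forall_hasFDerivAt_of_fderiv_symmetric Metric.isOpen_ball
      (hω.mono (hrΩ i)) fun a ha ↦ hsymm a (hrΩ i ha)
  choose f hf using hloc
  have hconst : ∀ i j : Ω, ∃ c : ℝ, ∀ x ∈ Metric.ball (i : E) (r i) ∩ Metric.ball (j : E) (r j),
      f i x - f j x = c := by
    intro i j
    rcases (Metric.ball (i : E) (r i) ∩ Metric.ball (j : E) (r j)).eq_empty_or_nonempty with
      h | ⟨y, hy⟩
    · exact ⟨0, by simp [h]⟩
    have hd : ∀ x ∈ Metric.ball (i : E) (r i) ∩ Metric.ball (j : E) (r j),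
        HasFDerivAt (fun x ↦ f i x - f j x) (0 : E →L[ℝ] ℝ) x := fun x hx ↦ by
      have h := (hf i x hx.1).sub (hf j x hx.2)
      rw [sub_self] at h
      exact h
    have ho := (Metric.isOpen_ball (x := (i : E)) (ε := r i)).inter
      (Metric.isOpen_ball (x := (j : E)) (ε := r j))
    refine ⟨f i y - f j y, fun x hx ↦ ?_⟩
    refine ((convex_ball (i : E) (r i)).inter (convex_ball (j : E) (r j)))
      |>.is_const_of_fderivWithin_eq_zero (𝕜 := ℝ) (f := fun x ↦ f i x - f j x)
        (fun x hx ↦ (hd x hx).differentiableAt.differentiableWithinAt) (fun x hx ↦ ?_) hx hy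
    rw [fderivWithin_of_isOpen ho hx, (hd x hx).fderiv]
  obtain ⟨φ, hφ⟩ := exists_glued_primitive (fun i : Ω ↦ {x : Ω | (x : E) ∈ Metric.ball (i : E) (r i)})
    (fun i ↦ Metric.isOpen_ball.preimage continuous_subtype_val)
    (fun i ↦ Metric.mem_ball_self (hr i)) (fun i x ↦ f i x) fun i j ↦ by
      obtain ⟨c, hc⟩ := hconst i j
      exact ⟨c, fun x hx ↦ hc x hx⟩
  classical
  refine ⟨fun x ↦ if h : x ∈ Ω then φ ⟨x, h⟩ else 0, fun x hx ↦ ?_⟩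
  obtain ⟨c, hφc⟩ := hφ ⟨x, hx⟩
  have hc : ∀ᶠ y : Ω in nhds ⟨x, hx⟩,
      (if h : (y : E) ∈ Ω then φ ⟨y, h⟩ else 0) = f ⟨x, hx⟩ y + c := by
    filter_upwards [hφc] with y hy
    rw [dif_pos y.2, hy]
  have hd := (hf ⟨x, hx⟩ x (Metric.mem_ball_self (hr _))).add_const c
  refine hd.congr_of_eventuallyEq ?_
  rw [eventually_nhds_subtype_iff Ω ⟨x, hx⟩ fun y ↦
    (if h : y ∈ Ω then φ ⟨y, h⟩ else 0) = f ⟨x, hx⟩ y + c, hΩ.nhdsWithin_eq hx] at hc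
  exact hc

theorem integrable_mul_of_tsupport {Ω : Set (ℝ × ℝ)} (hΩ : IsOpen Ω) {f g : ℝ × ℝ → ℝ}
    (hf : ContinuousOn f Ω) (hg : Continuous g) (hgc : HasCompactSupport g) (hgΩ : tsupport g ⊆ Ω) :
    Integrable (fun x ↦ f x * g x) := by
  refine Continuous.integrable_of_hasCompactSupport ?_ hgc.mul_left
  refine continuous_of_tsupport fun x hx ↦ ?_
  have hxΩ := hgΩ (tsupport_mul_subset_right hx)
  exact (hf.continuousAt (hΩ.mem_nhds hxΩ)).mul hg.continuousAt

/-- Integrating by parts against test functions, a weakly divergence-free `C¹` field has vanishing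
classical divergence, by the fundamental lemma of the calculus of variations. -/
theorem divergence_eq_zero {Ω : Set (ℝ × ℝ)} (hΩ : IsOpen Ω)
    {F : ℝ × ℝ → ℝ × ℝ} (hF : ContDiffOn ℝ 1 F Ω)
    (hweak : ∀ v : ℝ × ℝ → ℝ, ContDiff ℝ (⊤ : ℕ∞) v → HasCompactSupport v →
      tsupport v ⊆ Ω → ∫ x in Ω, dot2 (F x) (grad2 v x) = 0) :
    ∀ x ∈ Ω, (fderiv ℝ F x (1, 0)).1 + (fderiv ℝ F x (0, 1)).2 = 0 := by
  have hF' : ContinuousOn (fderiv ℝ F) Ω := hF.continuousOn_fderiv_of_isOpen hΩ le_rfl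
  have hFd : ∀ x ∈ Ω, DifferentiableAt ℝ F x := fun x hx ↦
    (hF.differentiableOn one_ne_zero).differentiableAt (hΩ.mem_nhds hx)
  have hd1 : ContinuousOn (fun x ↦ (fderiv ℝ F x (1, 0)).1) Ω := by fun_prop
  have hd2 : ContinuousOn (fun x ↦ (fderiv ℝ F x (0, 1)).2) Ω := by fun_prop
  have hdc := hd1.add hd2
  have hc1 : ContinuousOn (fun x ↦ (F x).1) Ω := hF.continuousOn.fst
  have hc2 : ContinuousOn (fun x ↦ (F x).2) Ω := hF.continuousOn.snd
  have he1 : ∀ x ∈ Ω, ∀ w, fderiv ℝ (fun x ↦ (F x).1) x w = (fderiv ℝ F x w).1 := fun x hx w ↦ by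
    rw [(hFd x hx).hasFDerivAt.fst.fderiv]; rfl
  have he2 : ∀ x ∈ Ω, ∀ w, fderiv ℝ (fun x ↦ (F x).2) x w = (fderiv ℝ F x w).2 := fun x hx w ↦ by
    rw [(hFd x hx).hasFDerivAt.snd.fderiv]; rfl
  refine Measure.eqOn_open_of_ae_eq (μ := volume) (g := fun _ ↦ (0 : ℝ)) ?_ hΩ hdc continuousOn_const
  refine (ae_restrict_iff' hΩ.measurableSet).2 ?_
  refine hΩ.ae_eq_zero_of_integral_contDiff_smul_eq_zero (hdc.locallyIntegrableOn hΩ.measurableSet)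
    fun v hv hvc hvΩ ↦ ?_
  have hv1 : Differentiable ℝ v := hv.differentiable (by simp)
  have hv' : Continuous (fderiv ℝ v) := hv.continuous_fderiv (by simp)
  -- Integration by parts for a component `G` of `F` with directional derivative `G'` along `w`. Off
  -- `Ω` nothing is known about `fderiv ℝ G`, but there `v` vanishes.
  have key : ∀ (G G' : ℝ × ℝ → ℝ) (w : ℝ × ℝ), ContinuousOn G Ω → ContinuousOn G' Ω →
      (∀ x ∈ Ω, DifferentiableAt ℝ G x) → (∀ x ∈ Ω, fderiv ℝ G x w = G' x) →
      Integrable (fun x ↦ G x * fderiv ℝ v x w) ∧ Integrable (fun x ↦ G' x * v x) ∧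
        ∫ x, G x * fderiv ℝ v x w = - ∫ x, G' x * v x := by
    intro G G' w hG hG' hGd hGe
    have hmul : ∀ x, fderiv ℝ G x w * v x = G' x * v x := fun x ↦ by
      by_cases hx : x ∈ Ω
      · rw [hGe x hx]
      · simp [image_eq_zero_of_notMem_tsupport fun h ↦ hx (hvΩ h)]
    have hi1 : Integrable (fun x ↦ G x * fderiv ℝ v x w) :=
      integrable_mul_of_tsupport hΩ hG (by fun_prop) (hvc.fderiv_apply ℝ w)
        ((tsupport_fderiv_apply_subset ℝ w).trans hvΩ)
    have hi2 : Integrable (fun x ↦ G' x * v x) :=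
      integrable_mul_of_tsupport hΩ hG' hv.continuous hvc hvΩ
    refine ⟨hi1, hi2, ?_⟩
    rw [integral_mul_fderiv_eq_neg_fderiv_mul_of_integrable (by simpa only [hmul] using hi2) hi1
      (integrable_mul_of_tsupport hΩ hG hv.continuous hvc hvΩ) (fun x hx ↦ hGd x (hvΩ hx))
      (fun x _ ↦ hv1 x)]
    simp only [hmul]
  obtain ⟨hi1, hj1, hk1⟩ := key _ _ (1, 0) hc1 hd1 (fun x hx ↦ (hFd x hx).fst)
    (fun x hx ↦ he1 x hx _)
  obtain ⟨hi2, hj2, hk2⟩ := key _ _ (0, 1) hc2 hd2 (fun x hx ↦ (hFd x hx).snd)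
    (fun x hx ↦ he2 x hx _)
  have h0 := hweak v hv hvc hvΩ
  rw [setIntegral_eq_integral_of_forall_compl_eq_zero] at h0
  · simp only [dot2, grad2, pd1, pd2] at h0
    rw [integral_add hi1 hi2, hk1, hk2] at h0
    calc _ = ∫ x, (fderiv ℝ F x (1, 0)).1 * v x + (fderiv ℝ F x (0, 1)).2 * v x := by
          congr 1; ext x; simp only [smul_eq_mul]; ring
      _ = 0 := by rw [integral_add hj1 hj2]; linarith
  · intro x hx
    have : fderiv ℝ v x = 0 := image_eq_zero_of_notMem_tsupport fun h ↦
      hx (hvΩ (tsupport_fderiv_subset ℝ h))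
    simp [dot2, grad2, pd1, pd2, this]

/-- On a nonempty open simply connected set Ω ⊆ ℝ², a C¹ vector field that is weakly
orthogonal to the gradients of all compactly supported smooth test functions is the
vector curl of a C² scalar potential. -/
theorem weak_divFree_exists_curl_potential
    (Ω : Set (ℝ × ℝ)) (hΩ : IsOpen Ω) (hne : Ω.Nonempty)
    (hsc : SimplyConnectedSpace Ω)
    (F : ℝ × ℝ → ℝ × ℝ) (hF : ContDiffOn ℝ 1 F Ω)
    (hweak : ∀ v : ℝ × ℝ → ℝ, ContDiff ℝ (⊤ : ℕ∞) v → HasCompactSupport v →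
      tsupport v ⊆ Ω → ∫ x in Ω, dot2 (F x) (grad2 v x) = 0) :
    ∃ φ : ℝ × ℝ → ℝ, ContDiffOn ℝ 2 φ Ω ∧ ∀ x ∈ Ω, F x = scurl φ x := by
  have hdiv := divergence_eq_zero hΩ hF hweak
  let L : ℝ × ℝ →L[ℝ] (ℝ × ℝ →L[ℝ] ℝ) :=
    (ContinuousLinearMap.fst ℝ ℝ ℝ).smulRight (ContinuousLinearMap.snd ℝ ℝ ℝ) -
      (ContinuousLinearMap.snd ℝ ℝ ℝ).smulRight (ContinuousLinearMap.fst ℝ ℝ ℝ)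
  have hL : ∀ p w, L p w = p.1 * w.2 - p.2 * w.1 := fun p w ↦ by simp [L]
  -- `ω = -F₂ dx₁ + F₁ dx₂`, the 1-form whose primitives are the potentials of `F`.
  let ω : ℝ × ℝ → ℝ × ℝ →L[ℝ] ℝ := fun x ↦ L (F x)
  have hω : ContDiffOn ℝ 1 ω Ω := L.contDiff.comp_contDiffOn hF
  obtain ⟨φ, hφ⟩ := exists_primitive_of_simplyConnected hΩ hsc (hω.differentiableOn one_ne_zero)
    fun a ha x y ↦ by
      have hFa : DifferentiableAt ℝ F a :=
        (hF.differentiableOn one_ne_zero).differentiableAt (hΩ.mem_nhds ha)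
      have hd : ∀ z, fderiv ℝ ω a z = L (fderiv ℝ F a z) := fun z ↦ by
        have h : HasFDerivAt ω (L.comp (fderiv ℝ F a)) a := L.hasFDerivAt.comp a hFa.hasFDerivAt
        rw [h.fderiv]; rfl
      have hz : ∀ z : ℝ × ℝ, fderiv ℝ F a z =
          z.1 • fderiv ℝ F a (1, 0) + z.2 • fderiv ℝ F a (0, 1) := fun z ↦ by
        rw [← map_smul, ← map_smul, ← map_add]; simp
      rw [hd, hd, hL, hL, hz x, hz y]
      simp only [Prod.fst_add, Prod.snd_add, Prod.smul_fst, Prod.smul_snd, smul_eq_mul]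
      linear_combination (x.1 * y.2 - x.2 * y.1) * hdiv a ha
  refine ⟨φ, ?_, fun x hx ↦ ?_⟩
  · rw [show (2 : WithTop ℕ∞) = 1 + 1 by norm_num, contDiffOn_succ_iff_fderiv_of_isOpen hΩ]
    exact ⟨fun x hx ↦ (hφ x hx).differentiableAt.differentiableWithinAt, by simp,
      hω.congr fun x hx ↦ (hφ x hx).fderiv⟩
  · simp only [scurl, pd1, pd2, (hφ x hx).fderiv, ω, hL]
    ext <;> simp
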